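/- Let G be a weighted graph with terminal set K and let X, Y ⊆ K be nonempty subsets with X ∩ Y = ∅. Then S(X) ∩ S(Y) = ∅; that is, minimum-cardinality minimizers realizing h_K^G(X) and h_K^G(Y) are disjoint. -/

import Mathlib

open scoped Classical

/-- A weighted graph with a distinguished embedded set of terminals indexed by `κ`:
a finite vertex type `V`, an embedding `ι : κ ↪ V` of the terminals, and a symmetric
nonnegative capacity function `c` on pairs of vertices. -/
structure WeightedGraph (κ : Type) where
  V : Type
  [fintypeV : Fintype V]
  ι : κ ↪ V
  c : V → V → ℝ
  symm : ∀ u v, c u v = c v u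
  nonneg : ∀ u v, 0 ≤ c u v

namespace WeightedGraph

variable {κ : Type}

instance (G : WeightedGraph κ) : Fintype G.V := G.fintypeV

/-- The cut function `h_G(A) = Σ_{u ∈ A, v ∉ A} c(u,v)`. -/
noncomputable def cutval (G : WeightedGraph κ) (A : Finset G.V) : ℝ :=
  ∑ u ∈ A, ∑ v ∈ Aᶜ, G.c u v

/-- The vertex sets realizing the terminal partition `(U, K \ U)`. -/
noncomputable def cutSets (G : WeightedGraph κ) (U : Finset κ) : Finset (Finset G.V) :=
  Finset.univ.filter fun A => ∀ x : κ, G.ι x ∈ A ↔ x ∈ U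

theorem cutSets_nonempty (G : WeightedGraph κ) (U : Finset κ) : (G.cutSets U).Nonempty := by
  refine ⟨U.image G.ι, ?_⟩
  simp [cutSets, Finset.mem_image, G.ι.injective.eq_iff]

/-- The terminal cut function `h_K^G(U) = min { h_G(A) : A ∩ K = U }`. -/
noncomputable def termCut (G : WeightedGraph κ) (U : Finset κ) : ℝ :=
  (G.cutSets U).inf' (G.cutSets_nonempty U) G.cutval

/-- `H` is a mimicking network for `(G, K)`: all minimum terminal cut values agree. -/
def IsMimicking (G H : WeightedGraph κ) : Prop :=
  ∀ U : Finset κ, H.termCut U = G.termCut U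

/-- `H` is a quotient (contraction) of `G` along the surjection `f`: terminals map to
terminals, and capacities between distinct classes are sums of the original capacities. -/
def IsQuotient (G H : WeightedGraph κ) (f : G.V → H.V) : Prop :=
  Function.Surjective f ∧ (∀ x : κ, f (G.ι x) = H.ι x) ∧
    ∀ y z : H.V, y ≠ z →
      H.c y z = ∑ u ∈ Finset.univ.filter (fun u => f u = y),
        ∑ v ∈ Finset.univ.filter (fun v => f v = z), G.c u v

end WeightedGraph

/-- `A` is a minimum-cardinality minimizer realizing the minimum terminal cut
`h_K^G(U)`: it induces the terminal partition `(U, K \ U)`, achieves the minimum cut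
value, and has minimum cardinality among all such minimizers. -/
def WeightedGraph.IsMinCutSet {κ : Type} (G : WeightedGraph κ) (U : Finset κ)
    (A : Finset G.V) : Prop :=
  (∀ x : κ, G.ι x ∈ A ↔ x ∈ U) ∧ G.cutval A = G.termCut U ∧
    ∀ B : Finset G.V, (∀ x : κ, G.ι x ∈ B ↔ x ∈ U) → G.cutval B = G.termCut U →
      A.card ≤ B.card

/-! The cut function `h` is submodular and, since capacities are symmetric, invariant under
complement. Replacing `B` by `Bᶜ` in the submodular inequality gives posimodularity:
`h(A \ B) + h(B \ A) ≤ h(A) + h(B)`. If `A` and `B` are minimum cuts for disjoint terminal sets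
`X` and `Y`, then `A \ B` and `B \ A` still cut off exactly `X` and `Y`, so both are again minimum
cuts. Minimality of the cardinality of `A` then forces `A \ B = A`. -/

namespace WeightedGraph

variable {κ : Type} (G : WeightedGraph κ)

theorem cutval_eq_sum_ite (A : Finset G.V) :
    G.cutval A = ∑ u, ∑ v, if u ∈ A ∧ v ∉ A then G.c u v else 0 := by
  simp only [cutval, ite_and, ← Finset.mem_compl, Finset.sum_ite_irrel, Finset.sum_const_zero,
    Finset.sum_ite_mem, Finset.univ_inter]

theorem cutval_compl (A : Finset G.V) : G.cutval Aᶜ = G.cutval A := by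
  rw [cutval, cutval, compl_compl, Finset.sum_comm]
  simp only [G.symm]

theorem cutval_inter_add_cutval_union_le (A B : Finset G.V) :
    G.cutval (A ∩ B) + G.cutval (A ∪ B) ≤ G.cutval A + G.cutval B := by
  simp only [cutval_eq_sum_ite, ← Finset.sum_add_distrib]
  refine Finset.sum_le_sum fun u _ => Finset.sum_le_sum fun v _ => ?_
  have hc : 0 ≤ G.c u v := G.nonneg u v
  by_cases huA : u ∈ A <;> by_cases hvA : v ∈ A <;> by_cases huB : u ∈ B <;>
    by_cases hvB : v ∈ B <;> simp [huA, hvA, huB, hvB, hc]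

theorem cutval_sdiff_add_cutval_sdiff_le (A B : Finset G.V) :
    G.cutval (A \ B) + G.cutval (B \ A) ≤ G.cutval A + G.cutval B := by
  have hunion : A ∪ Bᶜ = (B \ A)ᶜ := by
    rw [Finset.sdiff_eq_inter_compl, Finset.compl_inter, compl_compl, Finset.union_comm]
  calc G.cutval (A \ B) + G.cutval (B \ A)
      = G.cutval (A ∩ Bᶜ) + G.cutval (A ∪ Bᶜ) := by
        rw [hunion, cutval_compl, Finset.sdiff_eq_inter_compl A B]
    _ ≤ G.cutval A + G.cutval Bᶜ := G.cutval_inter_add_cutval_union_le A Bᶜ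
    _ = G.cutval A + G.cutval B := by rw [cutval_compl]

variable {G} {U W : Finset κ} {A B : Finset G.V}

theorem mem_cutSets : A ∈ G.cutSets U ↔ ∀ x : κ, G.ι x ∈ A ↔ x ∈ U := by
  simp only [cutSets, Finset.mem_filter_univ]

theorem sdiff_mem_cutSets (hA : A ∈ G.cutSets U) (hB : B ∈ G.cutSets W) :
    A \ B ∈ G.cutSets (U \ W) := by
  rw [mem_cutSets] at hA hB ⊢
  simp only [Finset.mem_sdiff, hA, hB, implies_true]

theorem termCut_le_cutval (hA : A ∈ G.cutSets U) : G.termCut U ≤ G.cutval A :=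
  Finset.inf'_le _ hA

theorem IsMinCutSet.mem_cutSets (hA : G.IsMinCutSet U A) : A ∈ G.cutSets U :=
  WeightedGraph.mem_cutSets.2 hA.1

theorem IsMinCutSet.eq_of_subset_of_cutval_le (hA : G.IsMinCutSet U A) (hB : B ∈ G.cutSets U)
    (hBA : B ⊆ A) (hcut : G.cutval B ≤ G.cutval A) : B = A := by
  obtain ⟨-, hAmin, hAcard⟩ := hA
  have hBmin : G.cutval B = G.termCut U := (hcut.trans_eq hAmin).antisymm (termCut_le_cutval hB)
  exact Finset.eq_of_subset_of_card_le hBA (hAcard B (WeightedGraph.mem_cutSets.1 hB) hBmin)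

end WeightedGraph

open WeightedGraph in
theorem minCutSet_disjoint_of_disjoint_general {κ : Type} {G : WeightedGraph κ} {X Y : Finset κ}
    {A B : Finset G.V} (hXY : Disjoint X Y) (hA : G.IsMinCutSet X A) (hB : B ∈ G.cutSets Y)
    (hBmin : G.cutval B = G.termCut Y) : Disjoint A B := by
  have hAB : A \ B ∈ G.cutSets X := hXY.sdiff_eq_left ▸ sdiff_mem_cutSets hA.mem_cutSets hB
  have hBA : B \ A ∈ G.cutSets Y := hXY.sdiff_eq_right ▸ sdiff_mem_cutSets hB hA.mem_cutSets
  have hcut : G.cutval (A \ B) ≤ G.cutval A := by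
    have hposi := G.cutval_sdiff_add_cutval_sdiff_le A B
    have hB_le : G.cutval B ≤ G.cutval (B \ A) := hBmin.trans_le (termCut_le_cutval hBA)
    linarith
  exact Finset.sdiff_eq_self_iff_disjoint.1
    (hA.eq_of_subset_of_cutval_le hAB Finset.sdiff_subset hcut)

/-- if `X, Y ⊆ K` are nonempty and disjoint then `S(X) ∩ S(Y) = ∅` for
any minimum-cardinality minimizers realizing `h_K^G(X)` and `h_K^G(Y)`. -/
theorem minCutSet_disjoint_of_disjoint {κ : Type} (G : WeightedGraph κ)
    (X Y : Finset κ) (hX : X.Nonempty) (hY : Y.Nonempty) (hXY : X ∩ Y = ∅)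
    (SX SY : Finset G.V) (hSX : G.IsMinCutSet X SX) (hSY : G.IsMinCutSet Y SY) :
    SX ∩ SY = ∅ := by
  rw [← Finset.disjoint_iff_inter_eq_empty] at hXY ⊢
  exact minCutSet_disjoint_of_disjoint_general hXY hSX hSY.mem_cutSets hSY.2.1
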